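/- Suppose 1 ≤ i ≤ n−1 and w_i ≠ w_{i+1}. If ((L_•),(L'_•)) ∈ Z(k̲)^i_w̲ and ((L'_•),(L''_•)) ∈ Z(s_i·k̲)^i_{s_i·w̲}, then L''_i = L_i; hence the set-theoretic composition of the correspondence Z(s_i·k̲)^i_{s_i·w̲} with the correspondence Z(k̲)^i_w̲ is the diagonal of Y(k̲)_w̲. -/

import Mathlib

open Polynomial

set_option synthInstance.maxHeartbeats 1000000
set_option maxHeartbeats 1000000

noncomputable section

abbrev KM (m : ℕ) := Fin m → RatFunc ℂ

abbrev SubM (m : ℕ) := Submodule (Polynomial ℂ) (KM m)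

def polyL0 (m : ℕ) : SubM m :=
  Submodule.pi Set.univ fun _ => LinearMap.range (Algebra.linearMap (Polynomial ℂ) (RatFunc ℂ))

abbrev QuotMod (m : ℕ) (A B : SubM m) := ↥B ⧸ (A.comap B.subtype)

def fdim (m : ℕ) (A B : SubM m) : ℕ := Module.finrank ℂ (QuotMod m A B)

def zmul (m : ℕ) (w : ℂ) : KM m →ₗ[Polynomial ℂ] KM m :=
  (Polynomial.X - Polynomial.C w) • LinearMap.id

def quotSmul (m : ℕ) (p : Polynomial ℂ) (A B : SubM m) :
    QuotMod m A B →ₗ[ℂ] QuotMod m A B where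
  toFun v := p • v
  map_add' x y := smul_add p x y
  map_smul' c x := smul_comm p c x

def IsYChain (m n : ℕ) (k : ℕ → ℕ) (w : ℕ → ℂ) (L : ℕ → SubM m) : Prop :=
  L 0 = polyL0 m ∧
  (∀ i < n, L i ≤ L (i + 1)) ∧
  (∀ i < n, FiniteDimensional ℂ (QuotMod m (L i) (L (i + 1)))) ∧
  (∀ i < n, fdim m (L i) (L (i + 1)) = k (i + 1)) ∧
  (∀ i < n, ∀ x ∈ L (i + 1), zmul m (w (i + 1)) x ∈ L i)

/-- `s_i` : exchanging the `i`-th and `(i+1)`-st entries of a sequence. -/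
def swapAt {α : Type*} (i : ℕ) (f : ℕ → α) : ℕ → α :=
  fun j => if j = i then f (i + 1) else if j = i + 1 then f i else f j

/-- The correspondence `Z(k)^i_w ⊆ Y(k)_w × Y(s_i·k)_{s_i·w}`. -/
def IsZPair (m n i : ℕ) (k : ℕ → ℕ) (w : ℕ → ℂ) (L L' : ℕ → SubM m) : Prop :=
  IsYChain m n k w L ∧ IsYChain m n (swapAt i k) (swapAt i w) L' ∧
  ∀ j, j ≠ i → L j = L' j

theorem swapAt_swapAt {α : Type*} (i : ℕ) (f : ℕ → α) : swapAt i (swapAt i f) = f := by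
  funext j
  unfold swapAt
  by_cases h1 : j = i
  · subst h1; simp
  · by_cases h2 : j = i + 1
    · subst h2; simp
    · simp [h1, h2]

theorem zmul_mem_of_mem {m : ℕ} (w : ℂ) {A : SubM m} {x : KM m} (h : x ∈ A) :
    zmul m w x ∈ A := by
  simpa [zmul] using A.smul_mem (Polynomial.X - Polynomial.C w) h

theorem zmul_comm' {m : ℕ} (a b : ℂ) (x : KM m) :
    zmul m a (zmul m b x) = zmul m b (zmul m a x) := by
  simp only [zmul, LinearMap.smul_apply, LinearMap.id_apply]
  exact smul_comm _ _ _

theorem zmul_sub' {m : ℕ} {a b : ℂ} (hab : a ≠ b) (x : KM m) :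
    (Polynomial.C (b - a)⁻¹ : Polynomial ℂ) • (zmul m a x - zmul m b x) = x := by
  have hne : b - a ≠ 0 := sub_ne_zero.mpr (Ne.symm hab)
  simp only [zmul, LinearMap.smul_apply, LinearMap.id_apply]
  rw [← sub_smul, smul_smul]
  have : (Polynomial.C (b - a)⁻¹ : Polynomial ℂ) *
      (Polynomial.X - Polynomial.C a - (Polynomial.X - Polynomial.C b)) = 1 := by
    rw [show (Polynomial.X - Polynomial.C a - (Polynomial.X - Polynomial.C b) : Polynomial ℂ)
      = Polynomial.C (b - a) by rw [Polynomial.C_sub]; ring, ← Polynomial.C_mul,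
      inv_mul_cancel₀ hne, Polynomial.C_1]
  rw [this, one_smul]

theorem mem_of_zmul {m : ℕ} {a b : ℂ} (hab : a ≠ b) {A : SubM m} {x : KM m}
    (h1 : zmul m a x ∈ A) (h2 : zmul m b x ∈ A) : x ∈ A := by
  rw [← zmul_sub' hab x]
  exact A.smul_mem _ (A.sub_mem h1 h2)

/-- The part of `B` which `z - a` sends into `A`. -/
def kerPart (m : ℕ) (a : ℂ) (A B : SubM m) : SubM m := B ⊓ A.comap (zmul m a)

theorem eq_kerPart {m : ℕ} {a b : ℂ} (hab : a ≠ b) {A M B : SubM m} (hAM : A ≤ M) (hMB : M ≤ B)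
    (h1 : ∀ x ∈ M, zmul m a x ∈ A) (h2 : ∀ x ∈ B, zmul m b x ∈ M) :
    M = kerPart m a A B := by
  ext x
  constructor
  · intro hx
    exact ⟨hMB hx, h1 x hx⟩
  · rintro ⟨hx, hx2⟩
    exact mem_of_zmul hab (hAM hx2) (h2 x hx)

def quotEquiv {m : ℕ} (P Q A B : SubM m) (hA : P ⊓ Q = A) (hB : P ⊔ Q = B) :
    QuotMod m A P ≃ₗ[ℂ] QuotMod m Q B := by
  subst hA hB
  exact (LinearMap.quotientInfEquivSupQuotient P Q).restrictScalars ℂ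

theorem exists_mid {m n i : ℕ} {k : ℕ → ℕ} {w : ℕ → ℂ} (hi : 1 ≤ i) (hin : i + 1 ≤ n)
    (hw : w i ≠ w (i + 1)) {L : ℕ → SubM m} (hL : IsYChain m n k w L) :
    ∃ L' : ℕ → SubM m, IsYChain m n (swapAt i k) (swapAt i w) L' ∧ ∀ j, j ≠ i → L j = L' j := by
  obtain ⟨j, rfl⟩ : ∃ j, i = j + 1 := ⟨i - 1, by omega⟩
  obtain ⟨h0, hle, hfd, hdim, hz⟩ := hL
  have hAM := hle j (by omega)
  have hMB := hle (j + 1) (by omega)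
  have hz1 := hz j (by omega)
  have hz2 := hz (j + 1) (by omega)
  set M' := kerPart m (w (j + 1 + 1)) (L j) (L (j + 1 + 1)) with hM'
  have hAM' : L j ≤ M' := fun x hx => ⟨hMB (hAM hx), zmul_mem_of_mem _ hx⟩
  have hM'B : M' ≤ L (j + 1 + 1) := fun x hx => hx.1
  have hz1' : ∀ x ∈ M', zmul m (w (j + 1 + 1)) x ∈ L j := fun x hx => hx.2
  have hz2' : ∀ x ∈ L (j + 1 + 1), zmul m (w (j + 1)) x ∈ M' := by
    intro x hx
    refine ⟨zmul_mem_of_mem _ hx, ?_⟩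
    change zmul m (w (j + 1 + 1)) (zmul m (w (j + 1)) x) ∈ L j
    rw [zmul_comm']
    exact hz1 _ (hz2 x hx)
  have hinf : L (j + 1) ⊓ M' = L j := by
    apply le_antisymm
    · rintro x ⟨hx, hx'⟩
      exact mem_of_zmul hw (hz1 x hx) (hz1' x hx')
    · exact le_inf hAM hAM'
  have hsup : L (j + 1) ⊔ M' = L (j + 1 + 1) := by
    apply le_antisymm
    · exact sup_le hMB hM'B
    · intro x hx
      exact mem_of_zmul hw (Submodule.mem_sup_right (hz2' x hx))
        (Submodule.mem_sup_left (hz2 x hx))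
  have e1 := quotEquiv (L (j + 1)) M' _ _ hinf hsup
  have e2 := quotEquiv M' (L (j + 1)) _ _ (inf_comm (L (j + 1)) M' ▸ hinf)
    (sup_comm (L (j + 1)) M' ▸ hsup)
  refine ⟨fun l => if l = j + 1 then M' else L l, ?_, fun l hl => by simp [hl]⟩
  have key : ∀ l < n,
      (if l = j + 1 then M' else L l) ≤ (if l + 1 = j + 1 then M' else L (l + 1)) ∧
      FiniteDimensional ℂ (QuotMod m (if l = j + 1 then M' else L l)
        (if l + 1 = j + 1 then M' else L (l + 1))) ∧
      fdim m (if l = j + 1 then M' else L l) (if l + 1 = j + 1 then M' else L (l + 1))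
        = swapAt (j + 1) k (l + 1) ∧
      ∀ x ∈ (if l + 1 = j + 1 then M' else L (l + 1)),
        zmul m (swapAt (j + 1) w (l + 1)) x ∈ (if l = j + 1 then M' else L l) := by
    intro l hl
    by_cases hl1 : l = j
    · subst hl1
      have hn : ¬ (l = l + 1) := by omega
      have s1 : swapAt (l + 1) k (l + 1) = k (l + 1 + 1) := by simp [swapAt]
      have s2 : swapAt (l + 1) w (l + 1) = w (l + 1 + 1) := by simp [swapAt]
      rw [if_neg hn, if_pos rfl, s1, s2]
      have := hfd (l + 1) (by omega)
      exact ⟨hAM', e2.symm.finiteDimensional, e2.finrank_eq.trans (hdim (l + 1) (by omega)), hz1'⟩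
    · by_cases hl2 : l = j + 1
      · subst hl2
        have hn : ¬ (j + 1 + 1 = j + 1) := by omega
        have s1 : swapAt (j + 1) k (j + 1 + 1) = k (j + 1) := by simp [swapAt]
        have s2 : swapAt (j + 1) w (j + 1 + 1) = w (j + 1) := by simp [swapAt]
        rw [if_neg hn, if_pos rfl, s1, s2]
        have := hfd j (by omega)
        exact ⟨hM'B, e1.finiteDimensional, e1.symm.finrank_eq.trans (hdim j (by omega)), hz2'⟩
      · have hn : ¬ (l + 1 = j + 1) := by omega
        have hn' : ¬ (l + 1 = j + 1 + 1) := by omega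
        have s1 : swapAt (j + 1) k (l + 1) = k (l + 1) := by simp only [swapAt, if_neg hn, if_neg hn']
        have s2 : swapAt (j + 1) w (l + 1) = w (l + 1) := by simp only [swapAt, if_neg hn, if_neg hn']
        rw [if_neg hn, if_neg hl2, s1, s2]
        exact ⟨hle l hl, hfd l hl, hdim l hl, hz l hl⟩
  refine ⟨?_, fun l hl => (key l hl).1, fun l hl => (key l hl).2.1, fun l hl => (key l hl).2.2.1,
    fun l hl => (key l hl).2.2.2⟩
  simpa using h0

theorem comp_eq {m n i : ℕ} {k : ℕ → ℕ} {w : ℕ → ℂ} (hi : 1 ≤ i) (hin : i + 1 ≤ n)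
    (hw : w i ≠ w (i + 1)) {L L' L'' : ℕ → SubM m}
    (hZ1 : IsZPair m n i k w L L')
    (hZ2 : IsZPair m n i (swapAt i k) (swapAt i w) L' L'') : L'' = L := by
  obtain ⟨h1, -, e1⟩ := hZ1
  obtain ⟨-, h2, e2⟩ := hZ2
  rw [swapAt_swapAt, swapAt_swapAt] at h2
  obtain ⟨j, rfl⟩ : ∃ j, i = j + 1 := ⟨i - 1, by omega⟩
  have ee : ∀ l, l ≠ j + 1 → L'' l = L l := fun l hl => ((e1 l hl).trans (e2 l hl)).symm
  funext l
  by_cases hl : l = j + 1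
  · subst hl
    obtain ⟨-, hle, -, -, hz⟩ := h1
    obtain ⟨-, hle2, -, -, hz2⟩ := h2
    rw [eq_kerPart hw (hle j (by omega)) (hle (j + 1) (by omega)) (hz j (by omega))
        (hz (j + 1) (by omega)),
      eq_kerPart hw (hle2 j (by omega)) (hle2 (j + 1) (by omega)) (hz2 j (by omega))
        (hz2 (j + 1) (by omega)), ee j (by omega), ee (j + 1 + 1) (by omega)]
  · exact ee l hl

/-- for `w_i ≠ w_{i+1}`, composing the correspondence `Z(s_i·k)^i_{s_i·w}`
with `Z(k)^i_w` gives back the original chain (`L''_i = L_i`); hence the set-theoretic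
composition of the two correspondences is the diagonal of `Y(k)_w`. -/
theorem statement5 (m : ℕ) (hm : 2 ≤ m) (n : ℕ) (k : ℕ → ℕ) (w : ℕ → ℂ)
    (hk : ∀ j, 1 ≤ j → j ≤ n → 1 ≤ k j ∧ k j ≤ m - 1)
    (i : ℕ) (hi : 1 ≤ i) (hin : i + 1 ≤ n) (hw : w i ≠ w (i + 1))
    (L L' L'' : ℕ → SubM m)
    (hZ1 : IsZPair m n i k w L L')
    (hZ2 : IsZPair m n i (swapAt i k) (swapAt i w) L' L'') :
    L'' i = L i ∧ L'' = L ∧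
    {p : (ℕ → SubM m) × (ℕ → SubM m) |
        ∃ Lmid : ℕ → SubM m, IsZPair m n i k w p.1 Lmid ∧
          IsZPair m n i (swapAt i k) (swapAt i w) Lmid p.2} =
      {p : (ℕ → SubM m) × (ℕ → SubM m) | IsYChain m n k w p.1 ∧ p.2 = p.1} := by
  have h := comp_eq hi hin hw hZ1 hZ2
  refine ⟨congrFun h i, h, ?_⟩
  ext ⟨P, Q⟩
  simp only [Set.mem_setOf_eq]
  constructor
  · rintro ⟨Lmid, ha, hb⟩
    exact ⟨ha.1, comp_eq hi hin hw ha hb⟩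
  · rintro ⟨hP, rfl⟩
    obtain ⟨Lmid, hY, he⟩ := exists_mid hi hin hw hP
    refine ⟨Lmid, ⟨hP, hY, he⟩, hY, ?_, fun j hj => (he j hj).symm⟩
    rw [swapAt_swapAt, swapAt_swapAt]
    exact hP
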